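/- arXiv:2102.05082 — 2 statements merged into one kernel-verified Lean document; each statement's English description precedes it below -/
import Mathlib

section
/- Suppose there exists a representation kernel q : X → Z → ℝ that satisfies both the marginal alignment condition (for all domains d, d' and all z, pZ d z = pZ d' z) and the conditional alignment condition (for all domains d, d', all labels y and all z with pZ d z > 0, pYZ d y z * pZ d' z = pYZ d' y z * pZ d z). Then the label distribution is invariant across domains: for all domains d, d' and all labels y, pY d y = pY d' y. -/
/-!
The joints `pYZ d y z` agree across domains pointwise: where the common marginal `pZ` is positive
it cancels from the conditional alignment equation, and where it is zero all the joints, being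
nonnegative summands of it, vanish. Summing over `z` recovers `pY d y`, because `q x` and `pX d y`
have total mass one.
-/

theorem eq_of_sum_eq_of_mul_sum_eq {ι R : Type*} [Fintype ι]
    [NonUnitalNonAssocSemiring R] [PartialOrder R] [IsOrderedAddMonoid R]
    [IsRightCancelMulZero R] {f g : ι → R}
    (hf : ∀ i, 0 ≤ f i) (hg : ∀ i, 0 ≤ g i) (hsum : ∑ i, f i = ∑ i, g i)
    (hmul : 0 < ∑ i, f i → ∀ i, f i * ∑ j, g j = g i * ∑ j, f j) : f = g := by
  rcases (Fintype.sum_nonneg hf).lt_or_eq with hpos | hzero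
  · funext i
    have hi : f i * ∑ j, f j = g i * ∑ j, f j := by simpa only [← hsum] using hmul hpos i
    exact mul_right_cancel₀ hpos.ne' hi
  · have hf_zero : f = 0 := (Fintype.sum_eq_zero_iff_of_nonneg hf).1 hzero.symm
    have hg_zero : g = 0 := (Fintype.sum_eq_zero_iff_of_nonneg hg).1 (hsum ▸ hzero.symm)
    rw [hf_zero, hg_zero]

theorem sum_sum_mul_of_sum_eq_one {X Z R : Type*} [Fintype X] [Fintype Z]
    [NonAssocSemiring R] (m : X → R) {q : X → Z → R} (hq : ∀ x, ∑ z, q x z = 1) :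
    ∑ z, ∑ x, m x * q x z = ∑ x, m x := by
  rw [Finset.sum_comm]
  simp only [← Finset.mul_sum, hq, mul_one]

theorem label_invariance_of_alignment_general
    {D Y Z X R : Type*} [Fintype Y] [Fintype Z] [Fintype X]
    [Semiring R] [PartialOrder R] [IsOrderedRing R] [IsRightCancelMulZero R]
    (pY : D → Y → R) (pX : D → Y → X → R) (q : X → Z → R)
    (hpY_nonneg : ∀ d y, 0 ≤ pY d y)
    (hpX_nonneg : ∀ d y x, 0 ≤ pX d y x) (hpX_sum : ∀ d y, ∑ x, pX d y x = 1)
    (hq_nonneg : ∀ x z, 0 ≤ q x z) (hq_sum : ∀ x, ∑ z, q x z = 1)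
    (pZ : D → Z → R) (hpZ : ∀ d z, pZ d z = ∑ y, ∑ x, pY d y * pX d y x * q x z)
    (pYZ : D → Y → Z → R) (hpYZ : ∀ d y z, pYZ d y z = ∑ x, pY d y * pX d y x * q x z)
    (hmarg : ∀ d d' z, pZ d z = pZ d' z)
    (hcond : ∀ d d' y z, 0 < pZ d z → pYZ d y z * pZ d' z = pYZ d' y z * pZ d z) :
    ∀ d d' y, pY d y = pY d' y := by
  have joint_nonneg (d y z) : 0 ≤ pYZ d y z := by
    rw [hpYZ]
    exact Finset.sum_nonneg fun x _ =>
      mul_nonneg (mul_nonneg (hpY_nonneg d y) (hpX_nonneg d y x)) (hq_nonneg x z)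
  have sum_joint_label (d z) : ∑ y, pYZ d y z = pZ d z := by simp only [hpZ, hpYZ]
  have sum_joint_repr (d y) : ∑ z, pYZ d y z = pY d y := by
    simp only [hpYZ, sum_sum_mul_of_sum_eq_one _ hq_sum, ← Finset.mul_sum, hpX_sum, mul_one]
  have joint_eq (d d' z) : (pYZ d · z) = (pYZ d' · z) := by
    apply eq_of_sum_eq_of_mul_sum_eq (joint_nonneg d · z) (joint_nonneg d' · z)
    · simpa only [sum_joint_label] using hmarg d d' z
    · simpa only [sum_joint_label] using fun hpos y => hcond d d' y z hpos
  intro d d' y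
  calc
    pY d y = ∑ z, pYZ d y z := (sum_joint_repr d y).symm
    _ = ∑ z, pYZ d' y z := Finset.sum_congr rfl fun z _ => congrFun (joint_eq d d' z) y
    _ = pY d' y := sum_joint_repr d' y

/-- If a representation kernel satisfies both the marginal alignment condition and the
conditional alignment condition, then the label distribution is invariant across domains. -/
theorem label_invariance_of_alignment
    {D Y Z X : Type*} [Fintype D] [Fintype Y] [Fintype Z] [Fintype X]
    (pY : D → Y → ℝ) (pX : D → Y → X → ℝ) (q : X → Z → ℝ)
    (hpY_nonneg : ∀ d y, 0 ≤ pY d y) (hpY_sum : ∀ d, ∑ y, pY d y = 1)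
    (hpX_nonneg : ∀ d y x, 0 ≤ pX d y x) (hpX_sum : ∀ d y, ∑ x, pX d y x = 1)
    (hq_nonneg : ∀ x z, 0 ≤ q x z) (hq_sum : ∀ x, ∑ z, q x z = 1)
    (pZ : D → Z → ℝ) (hpZ : ∀ d z, pZ d z = ∑ y, ∑ x, pY d y * pX d y x * q x z)
    (pYZ : D → Y → Z → ℝ) (hpYZ : ∀ d y z, pYZ d y z = ∑ x, pY d y * pX d y x * q x z)
    (hmarg : ∀ d d' z, pZ d z = pZ d' z)
    (hcond : ∀ d d' y z, 0 < pZ d z → pYZ d y z * pZ d' z = pYZ d' y z * pZ d z) :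
    ∀ d d' y, pY d y = pY d' y :=
  label_invariance_of_alignment_general pY pX q hpY_nonneg hpX_nonneg hpX_sum hq_nonneg hq_sum
    pZ hpZ pYZ hpYZ hmarg hcond
end

section
/- Suppose f : X ≃ X is a bijection of the finite data space that transports each class-conditional data distribution of domain d to that of domain d', in the sense that pX d y x = pX d' y (f x) for all y and x, and suppose the label distribution is invariant: pY d y = pY d' y for all y. Suppose the representation kernel q is invariant under f: q (f x) z = q x z for all x, z. Then the marginal representation distributions coincide: pZ d z = pZ d' z for all z. -/
theorem hasSum_mul_iff_of_equiv {R V W : Type*} [AddCommMonoid R] [Mul R] [TopologicalSpace R]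
    (e : V ≃ W) {p g : V → R} {p' g' : W → R} {a : R}
    (hp : ∀ v, p v = p' (e v)) (hg : ∀ v, g' (e v) = g v) :
    HasSum (fun v => p v * g v) a ↔ HasSum (fun w => p' w * g' w) a := by
  have hcomp : (fun v => p v * g v) = (fun w => p' w * g' w) ∘ e :=
    funext fun v => congrArg₂ (· * ·) (hp v) (hg v).symm
  rw [hcomp, e.hasSum_iff]

/- The marginal is given by `HasSum` over `Y × X` rather than by `∑'`, whose value `0` on a
divergent family would make the equality of two divergent marginals meaningless. -/
theorem marginal_alignment_of_invariant_kernel_general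
    {R D Y Z X : Type*} [AddCommMonoid R] [Mul R] [TopologicalSpace R] [T2Space R]
    (d d' : D) (pY : D → Y → R) (pX : D → Y → X → R) (q : X → Z → R) (pZ : D → Z → R)
    (hpZ : ∀ d z, HasSum (fun w : Y × X => pY d w.1 * pX d w.1 w.2 * q w.2 z) (pZ d z))
    (f : Y → X ≃ X) (htrans : ∀ y x, pX d y x = pX d' y (f y x))
    (hlabel : ∀ y, pY d y = pY d' y)
    (hinv : ∀ y x z, q (f y x) z = q x z) (z : Z) :
    pZ d z = pZ d' z := by
  let e : Y × X ≃ Y × X := Equiv.prodShear (Equiv.refl Y) f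
  have joint_transport (w : Y × X) :
      pY d w.1 * pX d w.1 w.2 = pY d' (e w).1 * pX d' (e w).1 (e w).2 :=
    congrArg₂ (· * ·) (hlabel w.1) (htrans w.1 w.2)
  have kernel_invariant (w : Y × X) : q (e w).2 z = q w.2 z := hinv w.1 w.2 z
  exact ((hasSum_mul_iff_of_equiv e joint_transport kernel_invariant).mp (hpZ d z)).unique
    (hpZ d' z)

/-- If a bijection `f` of the data space transports each class-conditional data distribution
of domain `d` to that of domain `d'`, the label distribution is invariant, and the
representation kernel is invariant under `f`, then the marginal representation
distributions of the two domains coincide. -/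
theorem marginal_alignment_of_invariant_kernel
    {D Y Z X : Type*} [Fintype D] [Fintype Y] [Fintype Z] [Fintype X]
    (d d' : D)
    (pY : D → Y → ℝ) (pX : D → Y → X → ℝ) (q : X → Z → ℝ)
    (hpY_nonneg : ∀ d y, 0 ≤ pY d y) (hpY_sum : ∀ d, ∑ y, pY d y = 1)
    (hpX_nonneg : ∀ d y x, 0 ≤ pX d y x) (hpX_sum : ∀ d y, ∑ x, pX d y x = 1)
    (hq_nonneg : ∀ x z, 0 ≤ q x z) (hq_sum : ∀ x, ∑ z, q x z = 1)
    (pZ : D → Z → ℝ) (hpZ : ∀ d z, pZ d z = ∑ y, ∑ x, pY d y * pX d y x * q x z)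
    (f : X ≃ X) (htrans : ∀ y x, pX d y x = pX d' y (f x))
    (hlabel : ∀ y, pY d y = pY d' y)
    (hinv : ∀ x z, q (f x) z = q x z) :
    ∀ z, pZ d z = pZ d' z := by
  refine marginal_alignment_of_invariant_kernel_general d d' pY pX q pZ (fun d z => ?_)
    (fun _ => f) htrans hlabel fun _ => hinv
  rw [hpZ, ← Fintype.sum_prod_type']
  exact hasSum_fintype _
end
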